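/- arXiv:1905.01815 — 3 statements merged into one kernel-verified Lean document; each statement's English description precedes it below -/
import Mathlib

section
/- For every a ∈ F_{q^2}^*: if Tr_{q/r}(a^{q+1}) = 0 or η(−Tr_{q/r}(a^{q+1})) = 1, then Σ_{x∈D} χ(ax) = q(r−1)/(2r); and if η(−Tr_{q/r}(a^{q+1})) = −1, then Σ_{x∈D} χ(ax) = −q(r+1)/(2r). -/
open Finset

section QuadraticFiniteExtension

variable {K L : Type*} [Field K] [Fintype K] [Field L] [Fintype L] [Algebra K L]

theorem finrank_eq_two_of_card_eq_sq (h : Fintype.card L = Fintype.card K ^ 2) :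
    Module.finrank K L = 2 :=
  Nat.pow_right_injective Fintype.one_lt_card (Module.card_eq_pow_finrank.symm.trans h)

theorem algebraMap_norm_of_card_eq_sq (h : Fintype.card L = Fintype.card K ^ 2) (x : L) :
    algebraMap K L (Algebra.norm K x) = x * x ^ Fintype.card K := by
  rw [FiniteField.algebraMap_norm_eq_prod_pow, finrank_eq_two_of_card_eq_sq h]
  simp [Finset.prod_range_succ]

theorem algebraMap_trace_of_card_eq_sq (h : Fintype.card L = Fintype.card K ^ 2) (x : L) :
    algebraMap K L (Algebra.trace K L x) = x + x ^ Fintype.card K := by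
  rw [FiniteField.algebraMap_trace_eq_sum_pow, finrank_eq_two_of_card_eq_sq h]
  simp [Finset.sum_range_succ]

theorem exists_trace_add_mul_norm_sub (h : Fintype.card L = Fintype.card K ^ 2)
    (a : L) {c : K} (hc : c ≠ 0) :
    ∃ b : L, ∀ x : L, Algebra.trace K L (a * (x - b)) + c * Algebra.norm K (x - b) =
      c * Algebra.norm K x + -(Algebra.norm K a / c) := by
  have hc' : algebraMap K L c ≠ 0 := by simpa using hc
  refine ⟨a ^ Fintype.card K / algebraMap K L c, fun x ↦ ?_⟩
  apply (algebraMap K L).injective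
  have hsub (u v : L) :
      (u - v) ^ Fintype.card K = u ^ Fintype.card K - v ^ Fintype.card K :=
    map_sub (FiniteField.frobeniusAlgHom K L) u v
  have hcq : algebraMap K L c ^ Fintype.card K = algebraMap K L c := by
    rw [← map_pow, FiniteField.pow_card]
  have haq : (a ^ Fintype.card K) ^ Fintype.card K = a := by
    rw [← pow_mul, ← sq, ← h, FiniteField.pow_card]
  simp only [map_add, map_mul, map_neg, map_div₀, algebraMap_norm_of_card_eq_sq h,
    algebraMap_trace_of_card_eq_sq h, mul_pow, hsub, div_pow, hcq, haq]
  field_simp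
  ring

theorem sum_addChar_mul_norm (h : Fintype.card L = Fintype.card K ^ 2) {ψ : AddChar K ℂ}
    (hψ : ψ.IsPrimitive) {c : K} (hc : c ≠ 0) :
    ∑ x : L, ψ (c * Algebra.norm K x) = -(Fintype.card K : ℂ) := by
  classical
  have key (d : K) (hd : d ≠ 0) :
      ∑ x : L, ψ (d * Algebra.norm K x) = ∑ x : L, ψ (Algebra.norm K x) := by
    obtain ⟨z, rfl⟩ := FiniteField.norm_surjective K L d
    have hz : z ≠ 0 := fun hz ↦ hd (by simp [hz])
    refine Fintype.sum_bijective (z * ·) (mulLeft_bijective₀ z hz) _ _ fun x ↦ ?_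
    simp only [map_mul]
  have htot : ∑ d : K, ∑ x : L, ψ (d * Algebra.norm K x) = Fintype.card K := by
    rw [Finset.sum_comm]
    simp_rw [AddChar.sum_mulShift _ hψ, Algebra.norm_eq_zero_iff]
    simp
  rw [← Finset.add_sum_erase _ _ (Finset.mem_univ (0 : K)),
    Finset.sum_congr rfl fun d hd ↦ key d (Finset.ne_of_mem_erase hd)] at htot
  simp only [zero_mul, AddChar.map_zero_eq_one, Finset.sum_const, Finset.card_univ, h,
    Finset.card_erase_of_mem (Finset.mem_univ (0 : K)), nsmul_eq_mul, mul_one] at htot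
  rw [Nat.cast_sub Fintype.card_pos] at htot
  push_cast at htot
  have hq : (Fintype.card K : ℂ) - 1 ≠ 0 := by
    rw [sub_ne_zero]
    exact_mod_cast Fintype.one_lt_card.ne'
  rw [key c hc]
  apply mul_left_cancel₀ hq
  linear_combination htot

theorem sum_addChar_trace_add_mul_norm (h : Fintype.card L = Fintype.card K ^ 2)
    {ψ : AddChar K ℂ} (hψ : ψ.IsPrimitive) (a : L) {c : K} (hc : c ≠ 0) :
    ∑ x : L, ψ (Algebra.trace K L (a * x)) * ψ (c * Algebra.norm K x) =
      -(Fintype.card K : ℂ) * ψ (-(Algebra.norm K a / c)) := by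
  obtain ⟨b, hb⟩ := exists_trace_add_mul_norm_sub h a hc
  rw [← sum_addChar_mul_norm h hψ hc, Finset.sum_mul, ← (Equiv.subRight b).sum_comp]
  refine Finset.sum_congr rfl fun x _ ↦ ?_
  simp only [Equiv.subRight_apply]
  rw [← AddChar.map_add_eq_mul, hb, AddChar.map_add_eq_mul]

end QuadraticFiniteExtension

section QuadraticCharacterSums

variable {F : Type*} [Field F] [Fintype F]

theorem sum_mulChar_mul_addChar_mul {χ : MulChar F ℂ} (hχ : χ ≠ 1) (hχ' : χ⁻¹ = χ)
    (ψ : AddChar F ℂ) (u : F) :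
    ∑ c, χ c * ψ (c * u) = χ u * gaussSum χ ψ := by
  rcases eq_or_ne u 0 with rfl | hu
  · simp [MulChar.sum_eq_zero_of_ne_one hχ, MulChar.map_zero]
  · have := gaussSum_mulShift_eq χ ψ (Units.mk0 u hu)
    simpa [gaussSum, hχ', mul_comm u] using this

/-- Evaluates the sum of `g` over the preimage under `Q` of the nonsquares, from the twists of the
sum of `g` by the additive characters `c * Q x`. -/
theorem sum_filter_quadraticChar_eq_neg_one [DecidableEq F] (hF : ringChar F ≠ 2)
    {ψ : AddChar F ℂ} (hψ : ψ.IsPrimitive) {X : Type*} [Fintype X] (Q : X → F) (g : X → ℂ) (m : ℂ) (A : F)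
    (h0 : ∑ x, g x = 0)
    (hg : ∀ c : F, c ≠ 0 → ∑ x, g x * ψ (c * Q x) = -m * ψ (-(A / c))) :
    ∑ x with quadraticChar F (Q x) = -1, g x =
      m / 2 * ((quadraticChar F (-A) : ℂ) + (if A = 0 then 1 else 0) - 1 / Fintype.card F) := by
  set η : MulChar F ℂ := (quadraticChar F).ringHomComp (Int.castRingHom ℂ) with hη
  have hη_apply (u : F) : η u = (quadraticChar F u : ℂ) := rfl
  have hη1 : η ≠ 1 :=
    (MulChar.ringHomComp_ne_one_iff (RingHom.injective_int _)).mpr (quadraticChar_ne_one hF)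
  have hη_inv : η⁻¹ = η := ((quadraticChar_isQuadratic F).comp _).inv
  have hcard : (Fintype.card F : ℂ) ≠ 0 := Nat.cast_ne_zero.mpr Fintype.card_ne_zero
  have hG : gaussSum η ψ ≠ 0 := gaussSum_ne_zero_of_nontrivial hcard hη1 hψ
  have hH : ∑ x, η (Q x) * g x = -m * η (-A) := by
    apply mul_right_cancel₀ hG
    have hswap : ∑ c, η c * ∑ x, g x * ψ (c * Q x) = (∑ x, η (Q x) * g x) * gaussSum η ψ := by
      simp_rw [Finset.mul_sum, Finset.sum_mul]
      rw [Finset.sum_comm]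
      refine Finset.sum_congr rfl fun x _ ↦ ?_
      rw [mul_right_comm, ← sum_mulChar_mul_addChar_mul hη1 hη_inv, Finset.sum_mul]
      exact Finset.sum_congr rfl fun c _ ↦ by ring
    rw [← hswap, mul_assoc, ← sum_mulChar_mul_addChar_mul hη1 hη_inv, Finset.mul_sum,
      ← Equiv.sum_comp (Equiv.inv F)]
    refine Finset.sum_congr rfl fun c _ ↦ ?_
    rcases eq_or_ne c 0 with rfl | hc
    · simp [MulChar.map_zero]
    · have : η c⁻¹ = η c := by rw [← MulChar.inv_apply', hη_inv]
      simp only [Equiv.inv_apply]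
      rw [hg _ (inv_ne_zero hc), this, div_inv_eq_mul, mul_neg c, mul_comm c]
      ring
  have hZ : (Fintype.card F : ℂ) * ∑ x, (if Q x = 0 then g x else 0) =
      m - m * (if A = 0 then (Fintype.card F : ℂ) else 0) := by
    have hswap : ∑ c, ∑ x, g x * ψ (c * Q x) =
        Fintype.card F * ∑ x, (if Q x = 0 then g x else 0) := by
      rw [Finset.sum_comm, Finset.mul_sum]
      refine Finset.sum_congr rfl fun x _ ↦ ?_
      rw [← Finset.mul_sum, AddChar.sum_mulShift _ hψ]
      split_ifs <;> simp [mul_comm]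
    have hA : ∑ c : F, ψ (-(A / c)) = if A = 0 then (Fintype.card F : ℂ) else 0 := by
      rw [← Equiv.sum_comp (Equiv.inv F)]
      have := AddChar.sum_mulShift (-A) hψ
      simp only [neg_eq_zero, Nat.cast_ite, Nat.cast_zero] at this
      rw [← this]
      exact Finset.sum_congr rfl fun c _ ↦ by
        simp only [Equiv.inv_apply]
        rw [div_inv_eq_mul, mul_neg, mul_comm]
    rw [← hswap, ← hA, ← Finset.add_sum_erase _ _ (Finset.mem_univ (0 : F)),
      Finset.sum_congr rfl fun c hc ↦ hg c (Finset.ne_of_mem_erase hc), ← Finset.mul_sum,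
      ← Finset.add_sum_erase _ (fun c : F ↦ ψ (-(A / c))) (Finset.mem_univ (0 : F))]
    simp only [zero_mul, AddChar.map_zero_eq_one, mul_one, h0, div_zero, neg_zero]
    ring
  have hind (x : X) : (if quadraticChar F (Q x) = -1 then g x else 0) =
      (g x - (if Q x = 0 then g x else 0) - η (Q x) * g x) / 2 := by
    rw [hη_apply]
    by_cases hx : Q x = 0
    · simp [hx]
    · rcases quadraticChar_dichotomy hx with h | h <;> simp [h, hx]
  rw [Finset.sum_filter, Finset.sum_congr rfl fun x _ ↦ hind x, ← Finset.sum_div,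
    Finset.sum_sub_distrib, Finset.sum_sub_distrib, h0, hH, ← hη_apply]
  apply mul_left_cancel₀ hcard
  field_simp
  split_ifs at hZ ⊢ <;> linear_combination -hZ

end QuadraticCharacterSums

/-- Pulling back a primitive additive character along the trace of a finite extension of finite
fields gives a primitive additive character. -/
theorem AddChar.IsPrimitive.compAddMonoidHom_trace {K L : Type*} [Field K] [Field L] [Finite L]
    [Algebra K L] {ψ : AddChar K ℂ} (hψ : ψ.IsPrimitive) :
    (ψ.compAddMonoidHom (Algebra.trace K L).toAddMonoidHom).IsPrimitive := by
  have := Finite.of_injective _ (algebraMap K L).injective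
  apply AddChar.IsPrimitive.of_ne_one
  obtain ⟨y, hy⟩ := AddChar.ne_one_iff.mp (hψ one_ne_zero)
  obtain ⟨x, rfl⟩ := Algebra.trace_surjective K L y
  refine AddChar.ne_one_iff.mpr ⟨x, ?_⟩
  simpa [AddChar.mulShift_apply] using hy

/-- For every `a ∈ F_{q^2}^*`: if `Tr_{q/r}(a^{q+1}) = 0` or
`η(−Tr_{q/r}(a^{q+1})) = 1`, then `Σ_{x∈D} χ(ax) = q(r−1)/(2r)`; and if
`η(−Tr_{q/r}(a^{q+1})) = −1`, then `Σ_{x∈D} χ(ax) = −q(r+1)/(2r)`.  Here `N` records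
`N x = x^{q+1} ∈ F_q` and `D = {x ∈ F_{q^2} : η(Tr_{q/r}(x^{q+1})) = −1}`. -/
theorem stmt8 (p t s : ℕ) [Fact p.Prime] (hp2 : Odd p) (ht : 0 < t) (hs : 0 < s)
    (Fr Fq Fq2 : Type) [Field Fr] [Fintype Fr] [DecidableEq Fr]
    [Field Fq] [Fintype Fq] [Field Fq2] [Fintype Fq2] [DecidableEq Fq2]
    [Algebra (ZMod p) Fq2] [Algebra Fr Fq] [Algebra Fq Fq2]
    (hr : Fintype.card Fr = p ^ t) (hq : Fintype.card Fq = (p ^ t) ^ s)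
    (hq2 : Fintype.card Fq2 = ((p ^ t) ^ s) ^ 2)
    (N : Fq2 → Fq) (hN : ∀ x : Fq2, algebraMap Fq Fq2 (N x) = x ^ (Fintype.card Fq + 1))
    (χ : Fq2 → ℂ)
    (hχ : ∀ x : Fq2, χ x = Complex.exp (2 * Real.pi * Complex.I *
      ((Algebra.trace (ZMod p) Fq2 x).val : ℂ) / (p : ℂ)))
    (D : Finset Fq2)
    (hD : D = Finset.univ.filter
      (fun x : Fq2 => quadraticChar Fr (Algebra.trace Fr Fq (N x)) = -1)) :
    ∀ a : Fq2, a ≠ 0 →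
      ((Algebra.trace Fr Fq (N a) = 0 ∨
          quadraticChar Fr (- Algebra.trace Fr Fq (N a)) = 1) →
        ∑ x ∈ D, χ (a * x) =
          ((p : ℂ) ^ t) ^ s * ((p : ℂ) ^ t - 1) / (2 * (p : ℂ) ^ t)) ∧
      (quadraticChar Fr (- Algebra.trace Fr Fq (N a)) = -1 →
        ∑ x ∈ D, χ (a * x) =
          -(((p : ℂ) ^ t) ^ s * ((p : ℂ) ^ t + 1)) / (2 * (p : ℂ) ^ t)) := by
  intro a ha
  have hr1 : (Fintype.card Fr : ℂ) = (p : ℂ) ^ t := by rw [hr]; push_cast; rfl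
  have hq1 : (Fintype.card Fq : ℂ) = ((p : ℂ) ^ t) ^ s := by rw [hq]; push_cast; rfl
  have hp0 : (p : ℂ) ^ t ≠ 0 := pow_ne_zero _ (Nat.cast_ne_zero.mpr (Fact.out : p.Prime).ne_zero)
  have hcard : Fintype.card Fq2 = Fintype.card Fq ^ 2 := by rw [hq2, hq]
  have hNnorm (x : Fq2) : N x = Algebra.norm Fq x := by
    apply (algebraMap Fq Fq2).injective
    rw [hN, algebraMap_norm_of_card_eq_sq hcard, pow_succ']
  have : CharP Fr p := charP_of_card_eq_prime_pow hr
  have hchar : ringChar Fr ≠ 2 := by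
    rw [ringChar.eq Fr p]
    rintro rfl
    exact absurd hp2 (by decide)
  let : Algebra (ZMod p) Fr := ZMod.algebra Fr p
  let : Algebra (ZMod p) Fq := ((algebraMap Fr Fq).comp (algebraMap (ZMod p) Fr)).toAlgebra
  have : IsScalarTower (ZMod p) Fr Fq := IsScalarTower.of_algebraMap_eq' rfl
  have : IsScalarTower (ZMod p) Fq Fq2 :=
    IsScalarTower.of_algebraMap_eq' (Subsingleton.elim _ _)
  let ψ : AddChar Fr ℂ := (ZMod.stdAddChar (N := p)).compAddMonoidHom
    (Algebra.trace (ZMod p) Fr).toAddMonoidHom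
  have hψ : ψ.IsPrimitive := (ZMod.isPrimitive_stdAddChar p).compAddMonoidHom_trace
  let Ψ : AddChar Fq ℂ := ψ.compAddMonoidHom (Algebra.trace Fr Fq).toAddMonoidHom
  have hΨ : Ψ.IsPrimitive := hψ.compAddMonoidHom_trace
  have hχΨ (x : Fq2) : χ x = Ψ (Algebra.trace Fq Fq2 x) := by
    simp only [Ψ, ψ, AddChar.compAddMonoidHom_apply, LinearMap.toAddMonoidHom_coe]
    rw [Algebra.trace_trace, Algebra.trace_trace, hχ, ZMod.stdAddChar_apply, ZMod.toCircle_apply]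
  have h0 : ∑ x, χ (a * x) = 0 := by
    simp_rw [hχΨ]
    exact AddChar.sum_eq_zero_of_ne_one (hΨ.compAddMonoidHom_trace (L := Fq2) ha)
  have hg (c : Fr) (hc : c ≠ 0) :
      ∑ x, χ (a * x) * ψ (c * Algebra.trace Fr Fq (N x)) =
        -(Fintype.card Fq : ℂ) * ψ (-(Algebra.trace Fr Fq (N a) / c)) := by
    have hmul (d : Fr) (y : Fq) : ψ (d * Algebra.trace Fr Fq y) = Ψ (algebraMap Fr Fq d * y) := by
      simp [Ψ, ← Algebra.smul_def]
    have hc' : algebraMap Fr Fq c ≠ 0 := by simpa using hc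
    simp_rw [hχΨ, hmul, hNnorm]
    rw [sum_addChar_trace_add_mul_norm hcard hΨ a hc', div_eq_inv_mul, div_eq_inv_mul,
      neg_mul_eq_neg_mul, neg_mul_eq_neg_mul, hmul, map_neg, map_inv₀]
  have hmain := sum_filter_quadraticChar_eq_neg_one hchar hψ _ _ _ _ h0 hg
  rw [hD, hmain, hq1, hr1]
  refine ⟨?_, fun h ↦ ?_⟩
  · rintro (h | h)
    · rw [h]
      simp
      field_simp
    · have hA : Algebra.trace Fr Fq (N a) ≠ 0 := fun hA ↦ by simp [hA] at h
      rw [h, if_neg hA]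
      push_cast
      field_simp
      ring
  · have hA : Algebra.trace Fr Fq (N a) ≠ 0 := fun hA ↦ by simp [hA] at h
    rw [h, if_neg hA]
    push_cast
    field_simp
    ring
end

section
/- As (a_i, a_j) ranges over all ordered pairs of distinct elements of F_{q^2}, the inner product (1/K)·Σ_{x∈D} χ((a_i − a_j)x) takes exactly two values: it equals (1/K)·q(r−1)/(2r) for exactly ((r+1)/(2r))q^4 − ((r−1)/(2r))q^3 − q^2 ordered pairs, and it equals −(1/K)·q(r+1)/(2r) for exactly ((r−1)/(2r))(q^4 + q^3) ordered pairs. -/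
open Finset

namespace FiniteFieldQuadratic

section Norm

variable {K L : Type*} [Field K] [Fintype K] [Field L] [Fintype L] [Algebra K L]

/-- A nontrivial character composed with a multiple of the quadratic norm sums to `-#K`. -/
theorem sum_addChar_mul_norm (h2 : Module.finrank K L = 2) {φ : AddChar K ℂ}
    (hφ : φ.IsPrimitive) {y : K} (hy : y ≠ 0) :
    ∑ x : L, φ (y * Algebra.norm K x) = -(Fintype.card K : ℂ) := by
  classical
  have hindep : ∀ v : K, v ≠ 0 →
      ∑ x : L, φ (v * Algebra.norm K x) = ∑ x : L, φ (y * Algebra.norm K x) := by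
    intro v hv
    obtain ⟨g, hg⟩ := FiniteField.norm_surjective K L (v / y)
    have hg0 : g ≠ 0 := by
      rintro rfl
      rw [Algebra.norm_zero] at hg
      exact div_ne_zero hv hy hg.symm
    rw [← Equiv.sum_comp (Equiv.mulLeft₀ g hg0) fun x ↦ φ (y * Algebra.norm K x)]
    refine Finset.sum_congr rfl fun x _ ↦ ?_
    rw [Equiv.mulLeft₀_apply, map_mul (Algebra.norm K), hg, ← mul_assoc, mul_div_cancel₀ _ hy]
  have hcard : (Fintype.card L : ℂ) = (Fintype.card K : ℂ) ^ 2 := by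
    rw [Module.card_eq_pow_finrank (K := K) (V := L), h2]
    push_cast
    rfl
  have htotal : ∑ v : K, ∑ x : L, φ (v * Algebra.norm K x) = Fintype.card K := by
    rw [Finset.sum_comm]
    simp_rw [AddChar.sum_mulShift _ hφ, Algebra.norm_eq_zero_iff]
    simp
  rw [← Finset.add_sum_erase _ _ (Finset.mem_univ (0 : K)),
    Finset.sum_congr rfl fun v hv ↦ hindep v (Finset.ne_of_mem_erase hv)] at htotal
  simp only [zero_mul, AddChar.map_zero_eq_one, Finset.sum_const, Finset.card_univ,
    nsmul_eq_mul, mul_one, Finset.card_erase_of_mem (Finset.mem_univ _), hcard,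
    Nat.cast_pred Fintype.card_pos] at htotal
  have h1 : (Fintype.card K : ℂ) - 1 ≠ 0 :=
    sub_ne_zero.mpr (by exact_mod_cast (Fintype.one_lt_card (α := K)).ne')
  apply mul_left_cancel₀ h1
  linear_combination htotal

theorem algebraMap_norm_eq_of_finrank_two (h2 : Module.finrank K L = 2) (x : L) :
    algebraMap K L (Algebra.norm K x) = x ^ (Fintype.card K + 1) := by
  rw [FiniteField.algebraMap_norm_eq_pow_sum, h2, Finset.sum_range_succ, Finset.sum_range_one,
    pow_zero, pow_one, Nat.card_eq_fintype_card, add_comm]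

theorem algebraMap_trace_eq_of_finrank_two (h2 : Module.finrank K L = 2) (x : L) :
    algebraMap K L (Algebra.trace K L x) = x + x ^ Fintype.card K := by
  rw [FiniteField.algebraMap_trace_eq_sum_pow, h2, Finset.sum_range_succ, Finset.sum_range_one,
    pow_zero, pow_one, Nat.card_eq_fintype_card, pow_one]

theorem pow_card_pow_card_of_finrank_two (h2 : Module.finrank K L = 2) (x : L) :
    (x ^ Fintype.card K) ^ Fintype.card K = x := by
  rw [← pow_mul, ← sq, ← h2, ← Module.card_eq_pow_finrank (K := K) (V := L),
    FiniteField.pow_card]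

theorem norm_add_pow_card (h2 : Module.finrank K L = 2) (x a : L) :
    Algebra.norm K (x + a ^ Fintype.card K) =
      Algebra.norm K x + Algebra.trace K L (a * x) + Algebra.norm K a := by
  apply (algebraMap K L).injective
  have hadd : (x + a ^ Fintype.card K) ^ Fintype.card K = x ^ Fintype.card K + a := by
    have h := map_add (FiniteField.frobeniusAlgHom K L) x (a ^ Fintype.card K)
    simp only [FiniteField.coe_frobeniusAlgHom] at h
    rw [h, pow_card_pow_card_of_finrank_two h2]
  simp only [map_add, algebraMap_norm_eq_of_finrank_two h2,
    algebraMap_trace_eq_of_finrank_two h2, pow_succ, hadd, mul_pow]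
  ring

/-- Completing the square in the character sum of a quadratic norm plus a linear form. -/
theorem sum_addChar_mul_norm_add_trace (h2 : Module.finrank K L = 2) {φ : AddChar K ℂ}
    (hφ : φ.IsPrimitive) {y : K} (hy : y ≠ 0) (b : L) :
    ∑ x : L, φ (y * Algebra.norm K x + Algebra.trace K L (b * x)) =
      -(Fintype.card K : ℂ) * φ (-(Algebra.norm K b / y)) := by
  rw [← sum_addChar_mul_norm h2 hφ hy, Finset.sum_mul,
    ← Equiv.sum_comp (Equiv.addRight ((y⁻¹ • b) ^ Fintype.card K))
      fun x ↦ φ (y * Algebra.norm K x) * φ (-(Algebra.norm K b / y))]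
  refine Finset.sum_congr rfl fun x _ ↦ ?_
  rw [Equiv.coe_addRight, ← AddChar.map_add_eq_mul, norm_add_pow_card h2, smul_mul_assoc,
    map_smul, Algebra.smul_def y⁻¹ b, map_mul (Algebra.norm K), Algebra.norm_algebraMap, h2, smul_eq_mul]
  congr 1
  field_simp
  ring

end Norm

section QuadraticChar

variable {k X : Type*} [Field k] [Fintype k] [DecidableEq k] [Fintype X]

/-- A character sum over the fibre of nonsquare values of `Q`, computed from the sums of
`χ` twisted by `ψ (y * Q x)`. -/
theorem sum_filter_quadraticChar_eq_neg_one (hk : ringChar k ≠ 2) {ψ : AddChar k ℂ}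
    (hψ : ψ.IsPrimitive) (Q : X → k) (χ : X → ℂ) (hχ : ∑ x, χ x = 0) (q : ℂ) (e : k)
    (hQ : ∀ y : k, y ≠ 0 → ∑ x, ψ (y * Q x) * χ x = -q * ψ (-(e / y))) :
    ∑ x with quadraticChar k (Q x) = -1, χ x =
      q * ((if e = 0 then 1 else 0) - 1 / (Fintype.card k : ℂ) + quadraticChar k (-e)) / 2 := by
  have hr : (Fintype.card k : ℂ) ≠ 0 := by exact_mod_cast Fintype.card_ne_zero
  set η : MulChar k ℂ := (quadraticChar k).ringHomComp (Int.castRingHom ℂ) with hη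
  have hη_apply (a : k) : η a = (quadraticChar k a : ℂ) := rfl
  have hη1 : η ≠ 1 := by
    rw [hη, MulChar.ringHomComp_ne_one_iff (RingHom.injective_int _)]
    exact quadraticChar_ne_one hk
  have hηinv (a : k) : η a⁻¹ = η a := by
    rw [hη_apply, hη_apply, ← Ring.inverse_eq_inv', ← MulChar.inv_apply,
      (quadraticChar_isQuadratic k).inv]
  have hG : gaussSum η ψ ≠ 0 := gaussSum_ne_zero_of_nontrivial hr hη1 hψ
  have hshift (a : k) : ∑ y, η y * ψ (y * a) = η a * gaussSum η ψ := by
    rcases eq_or_ne a 0 with rfl | ha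
    · simp [MulChar.sum_eq_zero_of_ne_one hη1, MulChar.map_zero]
    · have h := gaussSum_mulShift η ψ (Units.mk0 a ha)
      rw [← h, Units.val_mk0, ← mul_assoc, ← map_mul]
      have : η (a * a) = 1 := by
        rw [hη_apply, ← sq, quadraticChar_sq_one' ha, Int.cast_one]
      rw [this, one_mul, gaussSum]
      simp [AddChar.mulShift_apply, mul_comm]
  have hzero : ∑ x with Q x = 0, χ x =
      -q * ((if e = 0 then 1 else 0) - 1 / (Fintype.card k : ℂ)) := by
    have h1 : ∑ y, ∑ x, ψ (y * Q x) * χ x =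
        Fintype.card k * ∑ x with Q x = 0, χ x := by
      rw [Finset.sum_comm]
      simp_rw [← Finset.sum_mul, AddChar.sum_mulShift _ hψ]
      rw [Finset.mul_sum, Finset.sum_filter]
      refine Finset.sum_congr rfl fun x _ ↦ ?_
      split_ifs <;> simp
    have h2 : ∑ y, ψ (-(e / y)) = if e = 0 then (Fintype.card k : ℂ) else 0 := by
      rw [← Equiv.sum_comp ((Equiv.inv k).trans (Equiv.neg k)) fun y ↦ ψ (-(e / y))]
      have := AddChar.sum_mulShift e hψ
      simp only [Equiv.trans_apply, Equiv.inv_apply, Equiv.neg_apply, div_neg, neg_neg,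
        div_inv_eq_mul]
      simp_rw [mul_comm e]
      rw [this]
      push_cast
      rfl
    rw [← Finset.add_sum_erase _ _ (Finset.mem_univ (0 : k)),
      Finset.sum_congr rfl fun y hy ↦ hQ y (Finset.ne_of_mem_erase hy), ← Finset.mul_sum] at h1
    rw [← Finset.add_sum_erase _ _ (Finset.mem_univ (0 : k))] at h2
    simp only [zero_mul, AddChar.map_zero_eq_one, one_mul, hχ, div_zero, neg_zero] at h1 h2
    apply mul_left_cancel₀ hr
    rw [← h1, zero_add, eq_sub_of_add_eq' h2]
    split_ifs
    · field_simp
    · field_simp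
      ring
  have hquad : ∑ x, η (Q x) * χ x = -q * η (-e) := by
    apply mul_left_cancel₀ hG
    have h1 : gaussSum η ψ * ∑ x, η (Q x) * χ x = ∑ y, η y * ∑ x, ψ (y * Q x) * χ x := by
      simp_rw [Finset.mul_sum]
      rw [Finset.sum_comm]
      refine Finset.sum_congr rfl fun x _ ↦ ?_
      simp_rw [← mul_assoc]
      rw [← Finset.sum_mul, hshift, mul_comm (gaussSum η ψ)]
    have h2 : ∀ y, η y * ∑ x, ψ (y * Q x) * χ x = -q * (η y * ψ (-(e / y))) := by
      intro y
      rcases eq_or_ne y 0 with rfl | hy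
      · simp [MulChar.map_zero]
      · rw [hQ y hy]
        ring
    rw [h1, Finset.sum_congr rfl fun y _ ↦ h2 y, ← Finset.mul_sum,
      ← Equiv.sum_comp (Equiv.inv k)]
    simp only [Equiv.inv_apply, hηinv, div_inv_eq_mul]
    have h3 := hshift (-e)
    simp only [mul_neg, mul_comm _ e] at h3
    rw [h3]
    ring
  have hind : ∑ x with quadraticChar k (Q x) = -1, χ x =
      (∑ x, χ x - ∑ x with Q x = 0, χ x - ∑ x, η (Q x) * χ x) / 2 := by
    rw [Finset.sum_filter, Finset.sum_filter, ← Finset.sum_sub_distrib,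
      ← Finset.sum_sub_distrib, Finset.sum_div]
    refine Finset.sum_congr rfl fun x _ ↦ ?_
    rw [hη_apply]
    rcases eq_or_ne (Q x) 0 with h | h
    · simp [h]
    · rcases quadraticChar_dichotomy h with h' | h' <;> simp [h, h']
  rw [hind, hχ, hzero, hquad, hη_apply]
  ring

end QuadraticChar

section Trace

variable {k K L : Type*} [Field k] [Fintype k] [Field K] [Fintype K] [Field L] [Fintype L]
  [Algebra k K] [Algebra K L]

theorem isPrimitive_comp_trace {ψ : AddChar k ℂ} (hψ : ψ.IsPrimitive) :
    (ψ.compAddMonoidHom (Algebra.trace k K).toAddMonoidHom).IsPrimitive := by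
  apply AddChar.IsPrimitive.of_ne_one
  intro h
  have h1 : ψ ≠ 1 := by
    have := hψ one_ne_zero
    rwa [AddChar.mulShift_one] at this
  apply h1
  ext a
  obtain ⟨b, rfl⟩ := Algebra.trace_surjective k K a
  exact DFunLike.congr_fun h b

theorem sum_filter_quadraticChar_trace_norm [DecidableEq k] (hk : ringChar k ≠ 2)
    (h2 : Module.finrank K L = 2) {ψ : AddChar k ℂ} (hψ : ψ.IsPrimitive) {b : L} (hb : b ≠ 0) :
    ∑ x : L with quadraticChar k (Algebra.trace k K (Algebra.norm K x)) = -1,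
        ψ (Algebra.trace k K (Algebra.trace K L (b * x))) =
      Fintype.card K * ((if Algebra.trace k K (Algebra.norm K b) = 0 then 1 else 0) -
        1 / (Fintype.card k : ℂ) +
        quadraticChar k (-Algebra.trace k K (Algebra.norm K b))) / 2 := by
  classical
  set φ := ψ.compAddMonoidHom (Algebra.trace k K).toAddMonoidHom with hφdef
  have hφ : φ.IsPrimitive := isPrimitive_comp_trace hψ
  have hφ_apply (z : K) : φ z = ψ (Algebra.trace k K z) := rfl
  refine sum_filter_quadraticChar_eq_neg_one hk hψ _ _ ?_ _ _ fun y hy ↦ ?_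
  · have h := AddChar.sum_mulShift b (isPrimitive_comp_trace (K := L) hφ)
    rw [if_neg hb, Nat.cast_zero] at h
    rw [← h]
    refine Finset.sum_congr rfl fun x _ ↦ ?_
    rw [mul_comm b]
    rfl
  · have hy' : algebraMap k K y ≠ 0 := by simpa using hy
    have h := sum_addChar_mul_norm_add_trace h2 hφ hy' b
    have h3 : -(Algebra.norm K b / algebraMap k K y) = (-y⁻¹) • Algebra.norm K b := by
      rw [Algebra.smul_def, map_neg, map_inv₀]
      ring
    rw [h3, hφ_apply, map_smul] at h
    rw [div_eq_inv_mul, ← neg_mul, ← smul_eq_mul (-y⁻¹), ← h]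
    refine Finset.sum_congr rfl fun x _ ↦ ?_
    rw [hφ_apply, map_add, AddChar.map_add_eq_mul, ← Algebra.smul_def, map_smul, smul_eq_mul]

end Trace

theorem card_filter_quadraticChar_neg {k K L : Type*} [Field k] [Fintype k] [DecidableEq k]
    [Field K] [Field L] [Fintype L] [Algebra k K] [Algebra K L] :
    #{x : L | quadraticChar k (-Algebra.trace k K (Algebra.norm K x)) = -1} =
      #{x : L | quadraticChar k (Algebra.trace k K (Algebra.norm K x)) = -1} := by
  obtain ⟨g, hg⟩ := FiniteField.norm_surjective K L (-1)
  have hg0 : g ≠ 0 := by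
    rintro rfl
    rw [Algebra.norm_zero] at hg
    exact neg_ne_zero.mpr one_ne_zero hg.symm
  refine Finset.card_equiv (Equiv.mulLeft₀ g hg0) fun x ↦ ?_
  simp [hg]

/-- The number of ordered pairs whose difference satisfies a given predicate. -/
theorem card_filter_sub {G : Type*} [AddCommGroup G] [Fintype G] (P : G → Prop)
    [DecidablePred P] :
    #{pr : G × G | P (pr.1 - pr.2)} = Fintype.card G * #{x : G | P x} := by
  rw [← Finset.card_univ, ← Finset.card_product]
  refine Finset.card_nbij' (fun pr ↦ (pr.2, pr.1 - pr.2)) (fun pr ↦ (pr.2 + pr.1, pr.1))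
    ?_ ?_ ?_ ?_ <;> rintro ⟨a, b⟩ <;> simp

end FiniteFieldQuadratic

/-- As `(a_i, a_j)` ranges over all ordered pairs of distinct elements of
`F_{q^2}`, the inner product `(1/K)·Σ_{x∈D} χ((a_i − a_j)x)` takes exactly two values:
`(1/K)·q(r−1)/(2r)` for exactly `((r+1)/(2r))q^4 − ((r−1)/(2r))q^3 − q^2` ordered pairs,
and `−(1/K)·q(r+1)/(2r)` for exactly `((r−1)/(2r))(q^4 + q^3)` ordered pairs.  Here
`K = #D = q(q+1)(r−1)/(2r)`. -/
theorem stmt9 (p t s : ℕ) [Fact p.Prime] (hp2 : Odd p) (ht : 0 < t) (hs : 0 < s)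
    (Fr Fq Fq2 : Type) [Field Fr] [Fintype Fr] [DecidableEq Fr]
    [Field Fq] [Fintype Fq] [Field Fq2] [Fintype Fq2] [DecidableEq Fq2]
    [Algebra (ZMod p) Fq2] [Algebra Fr Fq] [Algebra Fq Fq2]
    (hr : Fintype.card Fr = p ^ t) (hq : Fintype.card Fq = (p ^ t) ^ s)
    (hq2 : Fintype.card Fq2 = ((p ^ t) ^ s) ^ 2)
    (N : Fq2 → Fq) (hN : ∀ x : Fq2, algebraMap Fq Fq2 (N x) = x ^ (Fintype.card Fq + 1))
    (χ : Fq2 → ℂ)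
    (hχ : ∀ x : Fq2, χ x = Complex.exp (2 * Real.pi * Complex.I *
      ((Algebra.trace (ZMod p) Fq2 x).val : ℂ) / (p : ℂ)))
    (D : Finset Fq2)
    (hD : D = Finset.univ.filter
      (fun x : Fq2 => quadraticChar Fr (Algebra.trace Fr Fq (N x)) = -1))
    (hK : (D.card : ℚ) = ((p : ℚ) ^ t) ^ s * (((p : ℚ) ^ t) ^ s + 1) *
      ((p : ℚ) ^ t - 1) / (2 * (p : ℚ) ^ t))
    (f : Fq2 × Fq2 → ℂ)
    (hf : ∀ pr : Fq2 × Fq2,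
      f pr = (1 / (D.card : ℂ)) * ∑ x ∈ D, χ ((pr.1 - pr.2) * x))
    (v₁ v₂ : ℂ)
    (hv₁ : v₁ = (1 / (D.card : ℂ)) *
      (((p : ℂ) ^ t) ^ s * ((p : ℂ) ^ t - 1) / (2 * (p : ℂ) ^ t)))
    (hv₂ : v₂ = -((1 / (D.card : ℂ)) *
      (((p : ℂ) ^ t) ^ s * ((p : ℂ) ^ t + 1) / (2 * (p : ℂ) ^ t)))) :
    (∀ pr : Fq2 × Fq2, pr.1 ≠ pr.2 → f pr = v₁ ∨ f pr = v₂) ∧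
    ((Set.ncard {pr : Fq2 × Fq2 | pr.1 ≠ pr.2 ∧ f pr = v₁} : ℚ) =
      (((p : ℚ) ^ t + 1) / (2 * (p : ℚ) ^ t)) * (((p : ℚ) ^ t) ^ s) ^ 4 -
        (((p : ℚ) ^ t - 1) / (2 * (p : ℚ) ^ t)) * (((p : ℚ) ^ t) ^ s) ^ 3 -
        (((p : ℚ) ^ t) ^ s) ^ 2) ∧
    ((Set.ncard {pr : Fq2 × Fq2 | pr.1 ≠ pr.2 ∧ f pr = v₂} : ℚ) =
      (((p : ℚ) ^ t - 1) / (2 * (p : ℚ) ^ t)) *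
        ((((p : ℚ) ^ t) ^ s) ^ 4 + (((p : ℚ) ^ t) ^ s) ^ 3)) := by
  classical
  have hp : p.Prime := Fact.out
  have hp3 : p ≠ 2 := by
    rintro rfl
    exact absurd hp2 (by decide)
  have : CharP Fr p := charP_of_card_eq_prime_pow hr
  have : CharP Fq p := charP_of_injective_algebraMap (algebraMap Fr Fq).injective p
  let _ : Algebra (ZMod p) Fr := ZMod.algebra Fr p
  let _ : Algebra (ZMod p) Fq := ZMod.algebra Fq p
  have : IsScalarTower (ZMod p) Fr Fq :=
    IsScalarTower.of_algebraMap_eq' (Subsingleton.elim _ _)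
  have : IsScalarTower (ZMod p) Fq Fq2 :=
    IsScalarTower.of_algebraMap_eq' (Subsingleton.elim _ _)
  have hchar : ringChar Fr ≠ 2 := by rwa [ringChar.eq Fr p]
  have h2 : Module.finrank Fq Fq2 = 2 := by
    have h := Module.card_eq_pow_finrank (K := Fq) (V := Fq2)
    rw [hq2, ← hq] at h
    exact (Nat.pow_right_injective Fintype.one_lt_card h).symm
  have hNorm : ∀ x, N x = Algebra.norm Fq x := fun x ↦ (algebraMap Fq Fq2).injective <| by
    rw [hN, FiniteFieldQuadratic.algebraMap_norm_eq_of_finrank_two h2]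
  obtain ⟨ψ, hψ, hχψ⟩ : ∃ ψ : AddChar Fr ℂ, ψ.IsPrimitive ∧
      ∀ x, χ x = ψ (Algebra.trace Fr Fq (Algebra.trace Fq Fq2 x)) := by
    refine ⟨_, FiniteFieldQuadratic.isPrimitive_comp_trace (K := Fr)
      (ZMod.isPrimitive_stdAddChar p), fun x ↦ ?_⟩
    have h : χ x = ZMod.stdAddChar (Algebra.trace (ZMod p) Fq2 x) := by
      rw [hχ]
      have h := ZMod.stdAddChar_coe (N := p) ((Algebra.trace (ZMod p) Fq2 x).val : ℤ)
      rw [Int.cast_natCast, ZMod.natCast_zmod_val] at h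
      rw [h, Int.cast_natCast]
    rw [h, ← Algebra.trace_trace (S := Fq), ← Algebra.trace_trace (S := Fr)]
    rfl
  set r : ℚ := (p : ℚ) ^ t with hr_def
  set q : ℚ := r ^ s with hq_def
  have hp1 : (1 : ℚ) < p := by exact_mod_cast hp.one_lt
  have hr1 : 1 < r := one_lt_pow₀ hp1 ht.ne'
  have hq1 : 1 < q := one_lt_pow₀ hr1 hs.ne'
  have hr0 : r ≠ 0 := (zero_lt_one.trans hr1).ne'
  have hrC : ((p : ℂ) ^ t) = (r : ℂ) := by rw [hr_def]; push_cast; rfl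
  have hqC : ((p : ℂ) ^ t) ^ s = (q : ℂ) := by rw [hq_def, hr_def]; push_cast; rfl
  have hD0 : (D.card : ℚ) ≠ 0 := by
    rw [hK]
    have : 0 < r - 1 := sub_pos.mpr hr1
    positivity
  have hD0C : (D.card : ℂ) ≠ 0 := by exact_mod_cast hD0
  have hr0C : (r : ℂ) ≠ 0 := by exact_mod_cast hr0
  have hq0C : (q : ℂ) ≠ 0 := by exact_mod_cast (zero_lt_one.trans hq1).ne'
  rw [hqC, hrC] at hv₁ hv₂
  let P : Fq2 → Prop := fun b ↦
    quadraticChar Fr (-Algebra.trace Fr Fq (Algebra.norm Fq b)) = -1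
  have hv12 : v₁ ≠ v₂ := by
    have h : v₁ - v₂ = (q : ℂ) / D.card := by
      rw [hv₁, hv₂]
      field_simp
      ring
    rw [← sub_ne_zero, h]
    exact div_ne_zero hq0C hD0C
  have hfval : ∀ pr : Fq2 × Fq2, pr.1 ≠ pr.2 →
      f pr = if P (pr.1 - pr.2) then v₂ else v₁ := by
    intro pr hne
    have h := FiniteFieldQuadratic.sum_filter_quadraticChar_trace_norm hchar h2 hψ
      (sub_ne_zero.mpr hne)
    rw [hr, hq] at h
    push_cast at h
    rw [hqC, hrC] at h
    simp_rw [← hχψ] at h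
    rw [hf]
    simp_rw [hNorm] at hD
    nth_rewrite 2 [hD]
    rw [h, hv₁, hv₂]
    rcases eq_or_ne (Algebra.trace Fr Fq (Algebra.norm Fq (pr.1 - pr.2))) 0 with h0 | h0
    · have hP : ¬ P (pr.1 - pr.2) := by simp [P, h0]
      rw [if_neg hP, if_pos h0, h0, neg_zero, MulChar.map_zero, Int.cast_zero]
      field_simp
      ring
    · rcases quadraticChar_dichotomy (neg_ne_zero.mpr h0) with h1 | h1
      · have hP : ¬ P (pr.1 - pr.2) := by
          simp only [P, h1]
          decide
        rw [if_neg hP, if_neg h0, h1, Int.cast_one]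
        field_simp
        ring
      · have hP : P (pr.1 - pr.2) := h1
        rw [if_pos hP, if_neg h0, h1, Int.cast_neg, Int.cast_one]
        field_simp
        ring
  have hP0 : ¬ P 0 := by simp [P, Algebra.norm_zero]
  have hPcard : #{x : Fq2 | P x} = D.card := by
    rw [hD]
    simp_rw [hNorm]
    exact FiniteFieldQuadratic.card_filter_quadraticChar_neg
  have hcard2 : #{pr : Fq2 × Fq2 | P (pr.1 - pr.2)} = Fintype.card Fq2 * D.card := by
    rw [FiniteFieldQuadratic.card_filter_sub P, hPcard]
  have hcard1 : #{pr : Fq2 × Fq2 | pr.1 - pr.2 ≠ 0 ∧ ¬ P (pr.1 - pr.2)} + Fintype.card Fq2 +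
      Fintype.card Fq2 * D.card = Fintype.card Fq2 ^ 2 := by
    rw [FiniteFieldQuadratic.card_filter_sub fun x ↦ x ≠ 0 ∧ ¬ P x, ← hPcard, sq,
      ← mul_add_one, ← mul_add]
    congr 1
    have h1 : ({x : Fq2 | x ≠ 0 ∧ ¬ P x} : Finset Fq2) = ({x | ¬ P x} : Finset Fq2).erase 0 := by
      ext x
      simp
    rw [h1, Finset.card_erase_add_one (by simpa using hP0), add_comm,
      Finset.card_filter_add_card_filter_not, Finset.card_univ]
  have hset1 : {pr : Fq2 × Fq2 | pr.1 ≠ pr.2 ∧ f pr = v₁} =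
      ({pr : Fq2 × Fq2 | pr.1 - pr.2 ≠ 0 ∧ ¬ P (pr.1 - pr.2)} : Finset (Fq2 × Fq2)) := by
    ext pr
    simp only [Set.mem_ofPred_eq, Finset.coe_filter, Finset.mem_univ, true_and, sub_ne_zero]
    refine and_congr_right fun hne ↦ ?_
    rw [hfval pr hne]
    split_ifs with h <;> simp [h, hv12.symm]
  have hset2 : {pr : Fq2 × Fq2 | pr.1 ≠ pr.2 ∧ f pr = v₂} =
      ({pr : Fq2 × Fq2 | P (pr.1 - pr.2)} : Finset (Fq2 × Fq2)) := by
    ext pr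
    simp only [Set.mem_ofPred_eq, Finset.coe_filter, Finset.mem_univ, true_and]
    constructor
    · rintro ⟨hne, h⟩
      by_contra hP
      rw [hfval pr hne, if_neg hP] at h
      exact hv12 h
    · intro hP
      have hne : pr.1 ≠ pr.2 := fun h ↦ hP0 (by rwa [h, sub_self] at hP)
      exact ⟨hne, by rw [hfval pr hne, if_pos hP]⟩
  have hq2Q : (Fintype.card Fq2 : ℚ) = q ^ 2 := by
    rw [hq2]
    push_cast
    rfl
  refine ⟨fun pr hne ↦ ?_, ?_, ?_⟩
  · rw [hfval pr hne]
    split_ifs <;> simp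
  · rw [hset1, Set.ncard_coe_finset]
    have h := congrArg (Nat.cast (R := ℚ)) hcard1
    push_cast at h
    rw [hq2Q, hK] at h
    rw [eq_sub_of_add_eq (eq_sub_of_add_eq h)]
    field_simp
    ring
  · rw [hset2, Set.ncard_coe_finset, hcard2]
    push_cast
    rw [hq2Q, hK]
    field_simp
end

section
/- For every a ∈ F_{q^2}^*, the sum Q = Σ_{x∈F_{q^2}} χ(ax)·η(Tr_{q/r}(x^{q+1})) satisfies: Q = 0 if Tr_{q/r}(a^{q+1}) = 0, and Q = −q·η(−Tr_{q/r}(a^{q+1})) if Tr_{q/r}(a^{q+1}) ≠ 0. -/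
open Finset

namespace FiniteField

section Quadratic

variable {K L : Type*} [Field K] [Fintype K] [Field L] [Fintype L] [Algebra K L]

theorem algebraMap_norm_of_finrank_two (h : Module.finrank K L = 2) (x : L) :
    algebraMap K L (Algebra.norm K x) = x * frobeniusAlgHom K L x := by
  simp [algebraMap_norm_eq_prod_pow, h, Finset.prod_range_succ]

theorem algebraMap_trace_of_finrank_two (h : Module.finrank K L = 2) (x : L) :
    algebraMap K L (Algebra.trace K L x) = x + frobeniusAlgHom K L x := by
  simp [algebraMap_trace_eq_sum_pow, h, Finset.sum_range_succ]

theorem frobeniusAlgHom_frobeniusAlgHom_of_finrank_two (h : Module.finrank K L = 2) (x : L) :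
    frobeniusAlgHom K L (frobeniusAlgHom K L x) = x := by
  have hc : Fintype.card L = Fintype.card K ^ 2 := h ▸ Module.card_eq_pow_finrank
  simp only [frobeniusAlgHom_apply, ← pow_mul]
  rw [← sq, ← hc, pow_card]

/-- Completing the square for the norm form of a quadratic extension of finite fields. -/
theorem mul_norm_add_trace_mul (h : Module.finrank K L = 2) {y : K} (hy : y ≠ 0) (a x : L) :
    y * Algebra.norm K x + Algebra.trace K L (a * x) =
      y * Algebra.norm K (x + algebraMap K L y⁻¹ * frobeniusAlgHom K L a) -
        y⁻¹ * Algebra.norm K a := by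
  apply (algebraMap K L).injective
  have hy' : algebraMap K L y ≠ 0 := by simpa using hy
  simp only [map_add, map_sub, map_mul, algebraMap_norm_of_finrank_two h,
    algebraMap_trace_of_finrank_two h, frobeniusAlgHom_frobeniusAlgHom_of_finrank_two h,
    AlgHom.commutes, map_inv₀]
  field_simp
  ring

theorem sum_addChar_mul_norm (h : Module.finrank K L = 2) {ψ : AddChar K ℂ} (hψ : ψ ≠ 1)
    {y : K} (hy : y ≠ 0) :
    ∑ x : L, ψ (y * Algebra.norm K x) = -(Fintype.card K : ℂ) := by
  classical
  have hc : Fintype.card L = Fintype.card K ^ 2 := h ▸ Module.card_eq_pow_finrank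
  have key : ∀ z : K, z ≠ 0 →
      ∑ x : L, ψ (z * Algebra.norm K x) = ∑ x : L, ψ (Algebra.norm K x) := by
    intro z hz
    obtain ⟨b, rfl⟩ := norm_surjective K L z
    have hb : b ≠ 0 := by rintro rfl; simp at hz
    simpa using Equiv.sum_comp (Equiv.mulLeft₀ b hb) fun x ↦ ψ (Algebra.norm K x)
  have total : ∑ z : K, ∑ x : L, ψ (z * Algebra.norm K x) = (Fintype.card K : ℂ) := by
    rw [Finset.sum_comm]
    simp_rw [AddChar.sum_mulShift _ (AddChar.IsPrimitive.of_ne_one hψ), Algebra.norm_eq_zero_iff]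
    simp
  rw [← Finset.add_sum_erase _ _ (mem_univ (0 : K)),
    Finset.sum_congr rfl fun z hz ↦ key z (ne_of_mem_erase hz)] at total
  simp only [zero_mul, AddChar.map_zero_eq_one, sum_const, card_univ, nsmul_eq_mul, mul_one,
    card_erase_of_mem (mem_univ _), hc] at total
  rw [key y hy]
  have hK : 1 < Fintype.card K := Fintype.one_lt_card
  have hK' : ((Fintype.card K : ℂ) - 1) ≠ 0 := by
    rw [sub_ne_zero]; exact_mod_cast hK.ne'
  push_cast [Nat.cast_sub hK.le] at total
  apply mul_left_cancel₀ hK'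
  linear_combination total

theorem sum_addChar_mul_norm_add_trace (h : Module.finrank K L = 2) {ψ : AddChar K ℂ}
    (hψ : ψ ≠ 1) {y : K} (hy : y ≠ 0) (a : L) :
    ∑ x : L, ψ (y * Algebra.norm K x + Algebra.trace K L (a * x)) =
      -(Fintype.card K : ℂ) * ψ (-(y⁻¹ * Algebra.norm K a)) := by
  simp_rw [mul_norm_add_trace_mul h hy, sub_eq_add_neg, AddChar.map_add_eq_mul, ← Finset.sum_mul]
  rw [← sum_addChar_mul_norm h hψ hy]
  congr 1
  exact Equiv.sum_comp (Equiv.addRight _) fun x ↦ ψ (y * Algebra.norm K x)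

end Quadratic

theorem addChar_comp_trace_ne_one {F K : Type*} [Field F] [Finite F] [Field K]
    [Finite K] [Algebra F K] {ψ : AddChar F ℂ} (hψ : ψ ≠ 1) :
    ψ.compAddMonoidHom (Algebra.trace F K).toAddMonoidHom ≠ 1 := by
  intro H
  refine hψ (AddChar.compAddMonoidHom_injective_left (Algebra.trace F K).toAddMonoidHom
    (Algebra.trace_surjective F K) ?_)
  ext x
  simpa using DFunLike.congr_fun H x

section GaussSum

variable {F : Type*} [Field F] [Fintype F] [DecidableEq F]

/-- The quadratic character with values in `ℂ`. -/
noncomputable def complexQuadraticChar (F : Type*) [Field F] [Fintype F] [DecidableEq F] :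
    MulChar F ℂ :=
  (quadraticChar F).ringHomComp (Int.castRingHom ℂ)

theorem complexQuadraticChar_apply (c : F) :
    complexQuadraticChar F c = (quadraticChar F c : ℂ) := rfl

theorem complexQuadraticChar_ne_one (hF : ringChar F ≠ 2) : complexQuadraticChar F ≠ 1 :=
  (MulChar.ringHomComp_ne_one_iff (RingHom.injective_int _)).mpr (quadraticChar_ne_one hF)

theorem complexQuadraticChar_inv (c : F) :
    complexQuadraticChar F c⁻¹ = complexQuadraticChar F c := by
  have h : (complexQuadraticChar F).IsQuadratic := (quadraticChar_isQuadratic F).comp _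
  rw [← MulChar.inv_apply', h.inv]

theorem sum_complexQuadraticChar_mul_addChar (hF : ringChar F ≠ 2) (ψ : AddChar F ℂ) (c : F) :
    ∑ y : F, complexQuadraticChar F y * ψ (y * c) =
      complexQuadraticChar F c * gaussSum (complexQuadraticChar F) ψ := by
  obtain rfl | hc := eq_or_ne c 0
  · simpa [MulChar.map_zero] using MulChar.sum_eq_zero_of_ne_one (complexQuadraticChar_ne_one hF)
  · have := gaussSum_mulShift_eq (complexQuadraticChar F) ψ (Units.mk0 c hc)
    rw [MulChar.inv_apply', Units.val_mk0, complexQuadraticChar_inv] at this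
    simpa [gaussSum, mul_comm] using this

theorem gaussSum_complexQuadraticChar_ne_zero (hF : ringChar F ≠ 2) {ψ : AddChar F ℂ}
    (hψ : ψ ≠ 1) : gaussSum (complexQuadraticChar F) ψ ≠ 0 :=
  gaussSum_ne_zero_of_nontrivial (by exact_mod_cast Fintype.card_ne_zero)
    (complexQuadraticChar_ne_one hF) (AddChar.IsPrimitive.of_ne_one hψ)

theorem sum_addChar_mul_quadraticChar_trace_norm {K L : Type*} [Field K] [Fintype K] [Field L]
    [Fintype L] [Algebra F K] [Algebra K L] (h : Module.finrank K L = 2) (hF : ringChar F ≠ 2)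
    {ψ : AddChar F ℂ} (hψ : ψ ≠ 1) (a : L) :
    ∑ x : L, ψ (Algebra.trace F K (Algebra.trace K L (a * x))) *
        (quadraticChar F (Algebra.trace F K (Algebra.norm K x)) : ℂ) =
      -(Fintype.card K : ℂ) * (quadraticChar F (-Algebra.trace F K (Algebra.norm K a)) : ℂ) := by
  simp_rw [← complexQuadraticChar_apply]
  apply mul_right_cancel₀ (gaussSum_complexQuadraticChar_ne_zero hF hψ)
  rw [mul_assoc, ← sum_complexQuadraticChar_mul_addChar hF, Finset.sum_mul]
  simp_rw [mul_assoc, ← sum_complexQuadraticChar_mul_addChar hF, Finset.mul_sum]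
  rw [Finset.sum_comm, ← Equiv.sum_comp (Equiv.inv F) fun y ↦ -(Fintype.card K : ℂ) *
    (complexQuadraticChar F y * ψ (y * -Algebra.trace F K (Algebra.norm K a)))]
  refine Finset.sum_congr rfl fun y _ ↦ ?_
  obtain rfl | hy := eq_or_ne y 0
  · simp [MulChar.map_zero]
  have key := sum_addChar_mul_norm_add_trace h (addChar_comp_trace_ne_one (K := K) hψ)
    (y := algebraMap F K y) (by simpa using hy) a
  simp only [AddChar.compAddMonoidHom_apply, LinearMap.toAddMonoidHom_coe, map_neg,
    ← Algebra.smul_def, ← map_inv₀, map_smul, smul_eq_mul, AddChar.map_add_eq_mul] at key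
  simp only [Equiv.inv_apply, complexQuadraticChar_inv, mul_neg]
  rw [mul_left_comm, ← key, Finset.mul_sum]
  exact Finset.sum_congr rfl fun x _ ↦ by ring

end GaussSum

end FiniteField

/-- For every `a ∈ F_{q^2}^*`, the sum
`Q = Σ_{x∈F_{q^2}} χ(ax)·η(Tr_{q/r}(x^{q+1}))` satisfies: `Q = 0` if
`Tr_{q/r}(a^{q+1}) = 0`, and `Q = −q·η(−Tr_{q/r}(a^{q+1}))` if `Tr_{q/r}(a^{q+1}) ≠ 0`.
Here `N` records `N x = x^{q+1} ∈ F_q`, `η` is the quadratic character of `F_r`, and `χ`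
is the canonical additive character of `F_{q^2}`. -/
theorem stmt14 (p t s : ℕ) [Fact p.Prime] (hp2 : Odd p) (ht : 0 < t) (hs : 0 < s)
    (Fr Fq Fq2 : Type) [Field Fr] [Fintype Fr] [DecidableEq Fr]
    [Field Fq] [Fintype Fq] [Field Fq2] [Fintype Fq2]
    [Algebra (ZMod p) Fq2] [Algebra Fr Fq] [Algebra Fq Fq2]
    (hr : Fintype.card Fr = p ^ t) (hq : Fintype.card Fq = (p ^ t) ^ s)
    (hq2 : Fintype.card Fq2 = ((p ^ t) ^ s) ^ 2)
    (N : Fq2 → Fq) (hN : ∀ x : Fq2, algebraMap Fq Fq2 (N x) = x ^ (Fintype.card Fq + 1))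
    (χ : Fq2 → ℂ)
    (hχ : ∀ x : Fq2, χ x = Complex.exp (2 * Real.pi * Complex.I *
      ((Algebra.trace (ZMod p) Fq2 x).val : ℂ) / (p : ℂ))) :
    ∀ a : Fq2, a ≠ 0 →
      (Algebra.trace Fr Fq (N a) = 0 →
        ∑ x : Fq2, χ (a * x) * (quadraticChar Fr (Algebra.trace Fr Fq (N x)) : ℂ) = 0) ∧
      (Algebra.trace Fr Fq (N a) ≠ 0 →
        ∑ x : Fq2, χ (a * x) * (quadraticChar Fr (Algebra.trace Fr Fq (N x)) : ℂ) =
          -(((p : ℂ) ^ t) ^ s) *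
            (quadraticChar Fr (- Algebra.trace Fr Fq (N a)) : ℂ)) := by
  have hFr : CharP Fr p := charP_of_card_eq_prime_pow hr
  have hFq : CharP Fq p := charP_of_injective_algebraMap (algebraMap Fr Fq).injective p
  let _ : Algebra (ZMod p) Fr := ZMod.algebra Fr p
  let _ : Algebra (ZMod p) Fq := ZMod.algebra Fq p
  have : IsScalarTower (ZMod p) Fr Fq := .of_algebraMap_eq' (Subsingleton.elim _ _)
  have : IsScalarTower (ZMod p) Fq Fq2 := .of_algebraMap_eq' (Subsingleton.elim _ _)
  have hF : ringChar Fr ≠ 2 := by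
    rw [ringChar.eq Fr p]
    rintro rfl
    exact absurd hp2 (by decide)
  have hfin : Module.finrank Fq Fq2 = 2 := by
    have hc := Module.card_eq_pow_finrank (K := Fq) (V := Fq2)
    rw [hq2, ← hq] at hc
    exact (Nat.pow_right_injective Fintype.one_lt_card hc).symm
  have hNorm : ∀ x, N x = Algebra.norm Fq x := fun x ↦ by
    apply (algebraMap Fq Fq2).injective
    rw [hN, FiniteField.algebraMap_norm_of_finrank_two hfin, FiniteField.frobeniusAlgHom_apply,
      pow_succ']
  have he : (ZMod.stdAddChar : AddChar (ZMod p) ℂ) ≠ 1 := by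
    simpa using ZMod.isPrimitive_stdAddChar p one_ne_zero
  have hχ' : ∀ x, χ x = (ZMod.stdAddChar.compAddMonoidHom
      (Algebra.trace (ZMod p) Fr).toAddMonoidHom : AddChar Fr ℂ)
        (Algebra.trace Fr Fq (Algebra.trace Fq Fq2 x)) := fun x ↦ by
    simp only [AddChar.compAddMonoidHom_apply, LinearMap.toAddMonoidHom_coe, Algebra.trace_trace]
    rw [hχ]
    simpa using (ZMod.stdAddChar_coe (N := p) ((Algebra.trace (ZMod p) Fq2 x).val : ℤ)).symm
  intro a _
  have main := FiniteField.sum_addChar_mul_quadraticChar_trace_norm hfin hF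
    (FiniteField.addChar_comp_trace_ne_one (K := Fr) he) a
  simp_rw [← hχ', ← hNorm, hq] at main
  push_cast at main
  exact ⟨fun h0 ↦ by rw [main, h0]; simp, fun _ ↦ main⟩
end
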